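/- Let G be a polynomial function on V × Z × ℝ not divisible by t, set F = G/t, and suppose there exist b₁, b₀ ∈ ℝ such that F satisfies the transnormality condition. If the degree of G in the variable t equals 2, then there exist a constant c ≠ 0, a real number β, a linear subspace W ⊆ V with orthogonal projection Π_W, a vector v₀ ∈ W, a linear subspace Y ⊆ Z with orthogonal projection Π_Y, a polynomial map c : V → Z, and a polynomial function d : V → ℝ such that G(v,z,t) = c·( t² + ½(‖Π_W(v − v₀)‖² − β)·t + ⟨z, Π_Y z⟩ + ⟨c(v), z⟩ + d(v) ). -/

import Mathlib

noncomputable section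

open MvPolynomial

/-- The standard inner product on `ℝᵏ`. -/
def dotR {k : ℕ} (a b : Fin k → ℝ) : ℝ := ∑ i, a i * b i

/-- Evaluation of a polynomial on `V × Z × ℝ` (`V = ℝⁿ`, `Z = ℝᵐ`) at the point `(v, z, t)`. -/
def evp {n m : ℕ} (q : MvPolynomial (Fin n ⊕ Fin m ⊕ Unit) ℝ)
    (v : Fin n → ℝ) (z : Fin m → ℝ) (t : ℝ) : ℝ :=
  MvPolynomial.eval (Sum.elim v (Sum.elim z fun _ => t)) q

/-- The transnormality condition for `F = G/t` with constants `b₁, b₀`: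
`(1/t)(−2G·∂_tG + Σᵢ (∂_{eᵢ}G − ½∂_{[eᵢ,v]}G)²) + Σ_α (∂_{f_α}G)² + (∂_tG)² = b₁·(G/t) + b₀`
at every point of the half-space `S = {t > 0}`, where `∂_{[eᵢ,v]}G = Σ_α [eᵢ,v]_α · ∂_{f_α}G`
and `[·,·] = br` is the Lie bracket `V × V → Z`. -/
def Transnormal (n m : ℕ) (br : (Fin n → ℝ) →ₗ[ℝ] (Fin n → ℝ) →ₗ[ℝ] (Fin m → ℝ))
    (G : MvPolynomial (Fin n ⊕ Fin m ⊕ Unit) ℝ) (b₁ b₀ : ℝ) : Prop :=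
  ∀ (v : Fin n → ℝ) (z : Fin m → ℝ) (t : ℝ), 0 < t →
    (1 / t) * (-2 * evp G v z t * evp (pderiv (Sum.inr (Sum.inr ())) G) v z t
        + ∑ i : Fin n,
            (evp (pderiv (Sum.inl i) G) v z t
              - (1 / 2) * ∑ α : Fin m,
                  (br (Pi.single i 1) v) α * evp (pderiv (Sum.inr (Sum.inl α)) G) v z t) ^ 2)
      + (∑ α : Fin m, (evp (pderiv (Sum.inr (Sum.inl α)) G) v z t) ^ 2)
      + (evp (pderiv (Sum.inr (Sum.inr ())) G) v z t) ^ 2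
    = b₁ * (evp G v z t / t) + b₀

/-!
Write `G = A t² + B t + D` with `A`, `B`, `D` polynomials in `(v, z)`; transnormality is then an
identity between polynomials in `t`. Over an ordered field a vanishing sum of squares of polynomials
vanishes termwise, so the coefficients of `t⁵` and `t⁴` force `A` to be a constant `c`, and that of
`t³` forces `B` not to depend on `z`.

The coefficient of `t²` says that `p = (B + b₁ / 2) / c` satisfies `|∇p|² = 2 p`. If `p` had degree
`N > 2`, the degree `2 (N - 1) > N` part of `|∇p|²` would be the squared gradient of the top part of
`p`, which would vanish. So `p` is quadratic, and differentiating `|∇p|² = 2 p` gives `H ∇p = ∇p`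
for the constant Hessian `H`; hence `H² = H` and `p = ½ ‖H (v - v₀)‖²`.

The coefficient of `t¹` bounds the `z`-degree of `D` by two in the same way, and its top part shows
that the `z`-quadratic part of `D` solves the same eikonal equation up to scaling. The coefficient
of `t⁰` shows that this quadratic part does not depend on `v`.
-/

section WeightedDegree

variable {σ R : Type*} [CommSemiring R] {w : σ → ℕ} {M N : ℕ} {p q : MvPolynomial σ R}

/-- The module of polynomials of weighted degree at most `N`. -/
def weightedDegreeLE (R : Type*) [CommSemiring R] (w : σ → ℕ) (N : ℕ) :
    Submodule R (MvPolynomial σ R) :=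
  restrictSupport R {d | Finsupp.weight w d ≤ N}

namespace weightedDegreeLE

lemma mem_iff : p ∈ weightedDegreeLE R w N ↔ ∀ d ∈ p.support, Finsupp.weight w d ≤ N :=
  Iff.rfl

lemma mono (h : M ≤ N) : weightedDegreeLE R w M ≤ weightedDegreeLE R w N :=
  restrictSupport_mono R fun _ hd ↦ le_trans hd h

lemma exists_mem (w : σ → ℕ) (p : MvPolynomial σ R) : ∃ N, p ∈ weightedDegreeLE R w N :=
  ⟨weightedTotalDegree w p, fun _ hd ↦ le_weightedTotalDegree w hd⟩

open scoped Pointwise in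
lemma mul_mem (hp : p ∈ weightedDegreeLE R w M) (hq : q ∈ weightedDegreeLE R w N) :
    p * q ∈ weightedDegreeLE R w (M + N) := by
  have hpq : p * q ∈ restrictSupport R
      ({d | Finsupp.weight w d ≤ M} + {d | Finsupp.weight w d ≤ N}) :=
    restrictSupport_add (R := R) _ _ ▸ Submodule.mul_mem_mul hp hq
  refine restrictSupport_mono R ?_ hpq
  rintro _ ⟨a, ha, b, hb, rfl⟩
  simpa using add_le_add ha hb

lemma pderiv_mem (i : σ) (hp : p ∈ weightedDegreeLE R w N) (h : N ≤ M + w i) :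
    pderiv i p ∈ weightedDegreeLE R w M := by
  refine mem_iff.2 fun d hd ↦ ?_
  rw [mem_support_iff, coeff_pderiv] at hd
  have := mem_iff.1 hp _ (mem_support_iff.2 (left_ne_zero_of_mul hd))
  rw [map_add, Finsupp.weight_single, one_smul] at this
  exact Nat.le_of_add_le_add_right (this.trans h)

lemma weight_eq_zero_of_mem_vars (hp : p ∈ weightedDegreeLE R w 0) {i : σ} (hi : i ∈ p.vars) :
    w i = 0 := by
  obtain ⟨d, hd, hid⟩ := (mem_vars_iff_mem_support _).1 hi
  exact Nat.eq_zero_of_le_zero <|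
    (Finsupp.le_weight_of_ne_zero' w (Finsupp.mem_support_iff.1 hid)).trans (mem_iff.1 hp d hd)

lemma component_eq_zero (hp : p ∈ weightedDegreeLE R w M) (h : M < N) :
    weightedHomogeneousComponent w N p = 0 :=
  weightedHomogeneousComponent_eq_zero' N p fun d hd ↦ ((mem_iff.1 hp d hd).trans_lt h).ne

lemma mem_of_component_eq_zero (hp : p ∈ weightedDegreeLE R w (N + 1))
    (h : weightedHomogeneousComponent w (N + 1) p = 0) : p ∈ weightedDegreeLE R w N := by
  intro d hd
  refine Nat.le_of_lt_succ <| (hp hd).lt_of_ne fun hdN ↦ mem_support_iff.1 hd ?_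
  simpa [coeff_weightedHomogeneousComponent, hdN] using congrArg (coeff d) h

lemma component_mul (hp : p ∈ weightedDegreeLE R w M) (hq : q ∈ weightedDegreeLE R w N) :
    weightedHomogeneousComponent w (M + N) (p * q) =
      weightedHomogeneousComponent w M p * weightedHomogeneousComponent w N q := by
  classical
  ext d
  simp only [coeff_weightedHomogeneousComponent, coeff_mul]
  split_ifs with hd
  · refine Finset.sum_congr rfl fun x hx ↦ ?_
    rw [← Finset.HasAntidiagonal.mem_antidiagonal.1 hx, map_add] at hd
    by_cases hx₁ : coeff x.1 p = 0
    · simp [hx₁]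
    by_cases hx₂ : coeff x.2 q = 0
    · simp [hx₂]
    have h₁ := mem_iff.1 hp _ (mem_support_iff.2 hx₁)
    have h₂ := mem_iff.1 hq _ (mem_support_iff.2 hx₂)
    rw [if_pos (by lia), if_pos (by lia)]
  · refine (Finset.sum_eq_zero fun x hx ↦ ?_).symm
    rw [← Finset.HasAntidiagonal.mem_antidiagonal.1 hx, map_add] at hd
    split_ifs <;> simp_all

end weightedDegreeLE

lemma weightedHomogeneousComponent_pderiv (w : σ → ℕ) (N : ℕ) (i : σ) (p : MvPolynomial σ R) :
    weightedHomogeneousComponent w N (pderiv i p) =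
      pderiv i (weightedHomogeneousComponent w (N + w i) p) := by
  ext d
  simp only [coeff_weightedHomogeneousComponent, coeff_pderiv, map_add, Finsupp.weight_single,
    one_smul, add_left_inj, ite_mul, zero_mul]

end WeightedDegree

section PartialDerivatives

variable {σ τ R : Type*} [CommSemiring R]

lemma pderiv_comm (i j : σ) (p : MvPolynomial σ R) :
    pderiv i (pderiv j p) = pderiv j (pderiv i p) := by
  classical
  ext d
  simp only [coeff_pderiv, add_right_comm d, Finsupp.add_apply, Finsupp.single_apply]
  split_ifs <;> simp_all [mul_right_comm]

variable [NoZeroDivisors R] [CharZero R] {p : MvPolynomial σ R}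

lemma pderiv_eq_zero_iff_notMem_vars {i : σ} : pderiv i p = 0 ↔ i ∉ p.vars := by
  refine ⟨fun h hi ↦ ?_, pderiv_eq_zero_of_notMem_vars⟩
  obtain ⟨d, hd, hid⟩ := (mem_vars_iff_mem_support _).1 hi
  have hle : Finsupp.single i 1 ≤ d := by
    simpa [Nat.one_le_iff_ne_zero] using hid
  have hcoeff := congrArg (coeff (d - Finsupp.single i 1)) h
  rw [coeff_pderiv, coeff_zero, tsub_add_cancel_of_le hle] at hcoeff
  exact (mul_ne_zero (mem_support_iff.1 hd) (Nat.cast_add_one_ne_zero _)) hcoeff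

lemma exists_rename_eq_of_pderiv_eq_zero {f : τ → σ} (hf : Function.Injective f)
    (h : ∀ i ∉ Set.range f, pderiv i p = 0) : ∃ q : MvPolynomial τ R, rename f q = p :=
  exists_rename_eq_of_vars_subset_range p f hf fun i hi ↦ by
    by_contra hif
    exact pderiv_eq_zero_iff_notMem_vars.1 (h i hif) hi

lemma eq_C_of_pderiv_eq_zero (h : ∀ i, pderiv i p = 0) : p = C (coeff 0 p) :=
  vars_eq_empty_iff_eq_C.1 <| Finset.eq_empty_of_forall_notMem fun i ↦
    pderiv_eq_zero_iff_notMem_vars.1 (h i)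

lemma eq_zero_of_isWeightedHomogeneous_of_pderiv_eq_zero {w : σ → ℕ} {N : ℕ} (hN : N ≠ 0)
    (hp : IsWeightedHomogeneous w p N) (h : ∀ i, w i ≠ 0 → pderiv i p = 0) : p = 0 := by
  ext d
  by_contra hd
  have hweight : Finsupp.weight w d = 0 := by
    rw [Finsupp.weight_apply]
    refine Finset.sum_eq_zero fun i hi ↦ ?_
    by_contra hi₀
    exact pderiv_eq_zero_iff_notMem_vars.1 (h i (right_ne_zero_of_mul hi₀))
      ((mem_vars_iff_mem_support _).2 ⟨d, mem_support_iff.2 hd, hi⟩)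
  exact hN ((hp hd).symm.trans hweight)

end PartialDerivatives

section GradPairing

/-- The pairing `Γ(p, q) = ∑ᵢ (Xᵢ p) (Xᵢ q)` of the gradients of `p` and `q` along a finite family
of derivations `X`. -/
def gradPairing {ι k A : Type*} [Fintype ι] [CommSemiring k] [CommSemiring A] [Algebra k A]
    (X : ι → Derivation k A A) : A →ₗ[k] A →ₗ[k] A :=
  ∑ i, (LinearMap.mul k A).compl₁₂ (X i : A →ₗ[k] A) (X i : A →ₗ[k] A)

section Algebra

variable {ι k A : Type*} [Fintype ι] [CommSemiring k] [CommSemiring A] [Algebra k A]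
  (X : ι → Derivation k A A)

lemma gradPairing_apply (p q : A) : gradPairing X p q = ∑ i, X i p * X i q := by
  simp [gradPairing, LinearMap.sum_apply]

lemma gradPairing_comm (p q : A) : gradPairing X p q = gradPairing X q p := by
  simp only [gradPairing_apply, mul_comm]

lemma gradPairing_eq_zero_of_left {p : A} (h : ∀ i, X i p = 0) (q : A) :
    gradPairing X p q = 0 := by
  simp [gradPairing_apply, h]

end Algebra

section WeightedDegree

variable {ι σ R : Type*} [Fintype ι] [CommSemiring R] {w : σ → ℕ} {e : ι → σ}
  {p q : MvPolynomial σ R}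

lemma gradPairing_rename (he : Function.Injective e) (p q : MvPolynomial ι R) :
    gradPairing (fun i ↦ pderiv (e i)) (rename e p) (rename e q) =
      rename e (gradPairing pderiv p q) := by
  simp [gradPairing_apply, pderiv_rename he]

lemma weightedHomogeneousComponent_gradPairing {M N : ℕ} (hw : ∀ i, w (e i) = 1)
    (hp : p ∈ weightedDegreeLE R w (M + 1)) (hq : q ∈ weightedDegreeLE R w (N + 1)) :
    weightedHomogeneousComponent w (M + N) (gradPairing (fun i ↦ pderiv (e i)) p q) =
      gradPairing (fun i ↦ pderiv (e i)) (weightedHomogeneousComponent w (M + 1) p)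
        (weightedHomogeneousComponent w (N + 1) q) := by
  simp only [gradPairing_apply, map_sum]
  refine Finset.sum_congr rfl fun i _ ↦ ?_
  rw [weightedDegreeLE.component_mul (weightedDegreeLE.pderiv_mem (e i) hp (by rw [hw]))
    (weightedDegreeLE.pderiv_mem (e i) hq (by rw [hw])), weightedHomogeneousComponent_pderiv,
    weightedHomogeneousComponent_pderiv, hw]

end WeightedDegree

variable {ι σ R : Type*} [Fintype ι] [CommRing R] [LinearOrder R] [IsStrictOrderedRing R]
  {p : MvPolynomial σ R}

lemma eq_zero_of_gradPairing_self_eq_zero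
    {X : ι → Derivation R (MvPolynomial σ R) (MvPolynomial σ R)}
    (h : gradPairing X p p = 0) (i : ι) : X i p = 0 := by
  refine MvPolynomial.funext fun x ↦ ?_
  have hx := congrArg (eval x) h
  simp only [gradPairing_apply, map_sum, map_mul, map_zero,
    Finset.sum_mul_self_eq_zero_iff] at hx
  simpa using hx i (Finset.mem_univ i)

lemma mem_weightedDegreeLE_two_of_gradPairing_mem {w : σ → ℕ} {e : ι → σ}
    (hw : ∀ i, w (e i) = 1) (hw₀ : ∀ j ∉ Set.range e, w j = 0)
    (h : ∀ N, p ∈ weightedDegreeLE R w N →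
      gradPairing (fun i ↦ pderiv (e i)) p p ∈ weightedDegreeLE R w N) :
    p ∈ weightedDegreeLE R w 2 := by
  obtain ⟨N, hN⟩ := weightedDegreeLE.exists_mem w p
  suffices ∀ K, p ∈ weightedDegreeLE R w (K + 2) → p ∈ weightedDegreeLE R w 2 from
    this N (weightedDegreeLE.mono (by lia) hN)
  intro K
  induction K with
  | zero => exact id
  | succ K ih =>
    intro hp
    refine ih (weightedDegreeLE.mem_of_component_eq_zero hp ?_)
    have htop := weightedHomogeneousComponent_gradPairing (M := K + 2) (N := K + 2) hw hp hp
    rw [weightedDegreeLE.component_eq_zero (h _ hp) (by lia), eq_comm] at htop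
    refine eq_zero_of_isWeightedHomogeneous_of_pderiv_eq_zero (Nat.succ_ne_zero _)
      (weightedHomogeneousComponent_isWeightedHomogeneous _ p) fun j hj ↦ ?_
    obtain ⟨i, rfl⟩ := not_imp_comm.1 (hw₀ j) hj
    exact eq_zero_of_gradPairing_self_eq_zero htop i

end GradPairing

section Quadratic

open Matrix

lemma eq_affine_of_pderiv_eq_C {ι R : Type*} [Fintype ι] [CommRing R] [NoZeroDivisors R]
    [CharZero R] {p : MvPolynomial ι R} {a : ι → R} (h : ∀ i, pderiv i p = C (a i)) :
    p = ∑ i, C (a i) * X i + C (coeff 0 p) := by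
  classical
  have hconst := eq_C_of_pderiv_eq_zero (p := p - ∑ i, C (a i) * X i) fun j ↦ by
    simp [h, pderiv_X, Pi.single_apply]
  rw [coeff_sub, show coeff 0 (∑ i, C (a i) * X i) = 0 by simp [coeff_sum], sub_zero] at hconst
  rw [← hconst, add_sub_cancel]

lemma pderiv_eq_sum_hessian_mul_pderiv {ι R : Type*} [Fintype ι] [CommRing R] [NoZeroDivisors R]
    [CharZero R] {p : MvPolynomial ι R} {H : Matrix ι ι R}
    (hp : gradPairing pderiv p p = (2 : R) • p)
    (hH : ∀ i j, pderiv j (pderiv i p) = C (H i j)) (j : ι) :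
    pderiv j p = ∑ i, C (H i j) * pderiv i p := by
  have hdiff := congrArg (pderiv j) hp
  simp only [gradPairing_apply, map_sum, Derivation.leibniz, hH, smul_eq_mul, Derivation.map_smul,
    mul_comm (pderiv _ p), ← two_smul R, ← Finset.smul_sum] at hdiff
  exact (smul_right_injective _ two_ne_zero hdiff).symm

variable {ι K : Type*} [Fintype ι] [Field K] [LinearOrder K] [IsStrictOrderedRing K]
  {p : MvPolynomial ι K}

lemma exists_pderiv_pderiv_eq_C (hp : gradPairing pderiv p p = (2 : K) • p) :
    ∃ H : Matrix ι ι K, H.IsSymm ∧ ∀ i j, pderiv j (pderiv i p) = C (H i j) := by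
  have hdeg : p ∈ weightedDegreeLE K 1 2 :=
    mem_weightedDegreeLE_two_of_gradPairing_mem (e := id) (fun _ ↦ rfl)
      (fun j hj ↦ absurd ⟨j, rfl⟩ hj) fun N hN ↦ hp ▸ Submodule.smul_mem _ _ hN
  refine ⟨fun i j ↦ coeff 0 (pderiv j (pderiv i p)),
    Matrix.IsSymm.ext fun i j ↦ by rw [pderiv_comm], fun i j ↦ ?_⟩
  have hmem : pderiv j (pderiv i p) ∈ weightedDegreeLE K 1 0 :=
    weightedDegreeLE.pderiv_mem j (weightedDegreeLE.pderiv_mem (M := 1) i hdeg le_rfl) le_rfl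
  exact vars_eq_empty_iff_eq_C.1 <| Finset.eq_empty_of_forall_notMem fun k hk ↦
    one_ne_zero (weightedDegreeLE.weight_eq_zero_of_mem_vars hmem hk)

theorem exists_projection_of_gradPairing_self (hp : gradPairing pderiv p p = (2 : K) • p) :
    ∃ P : Matrix ι ι K, P.IsSymm ∧ IsIdempotentElem P ∧ ∃ v₀, P *ᵥ v₀ = v₀ ∧
      ∀ x, eval x p = 1 / 2 * (P *ᵥ (x - v₀) ⬝ᵥ P *ᵥ (x - v₀)) := by
  classical
  obtain ⟨H, hsymm, hH⟩ := exists_pderiv_pderiv_eq_C hp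
  set u : ι → K := fun i ↦ coeff 0 (pderiv i p) with hu
  have hgrad (x : ι → K) : (fun i ↦ eval x (pderiv i p)) = H *ᵥ x + u := by
    ext i
    rw [eq_affine_of_pderiv_eq_C (hH i)]
    simp [mulVec, dotProduct, hu]
  have hfix (x : ι → K) : H *ᵥ (H *ᵥ x + u) = H *ᵥ x + u := by
    ext j
    rw [← hgrad]
    simp only [pderiv_eq_sum_hessian_mul_pderiv hp hH j, map_sum, map_mul, eval_C, mulVec,
      dotProduct, hsymm.apply]
  have hu_fix : H *ᵥ u = u := by simpa using hfix 0
  refine ⟨H, hsymm, ?_, -u, by rw [mulVec_neg, hu_fix], fun x ↦ ?_⟩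
  · refine Matrix.ext_of_mulVec_single fun i ↦ ?_
    simpa only [mulVec_add, hu_fix, add_left_inj, mulVec_mulVec] using hfix (Pi.single i 1)
  · have hx : 2 * eval x p = (H *ᵥ x + u) ⬝ᵥ (H *ᵥ x + u) := by
      rw [← hgrad]
      simpa [gradPairing_apply, dotProduct] using (congrArg (eval x) hp).symm
    rw [sub_neg_eq_add, mulVec_add, hu_fix, ← hx]
    ring

theorem exists_projection_of_gradPairing_self_of_coeff_zero
    (hp : gradPairing pderiv p p = (2 : K) • p) (hp₀ : coeff 0 p = 0) :
    ∃ P : Matrix ι ι K, P.IsSymm ∧ IsIdempotentElem P ∧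
      ∀ x, eval x p = 1 / 2 * (x ⬝ᵥ P *ᵥ x) := by
  obtain ⟨P, hsymm, hidem, v₀, hv₀, heval⟩ := exists_projection_of_gradPairing_self hp
  have hv₀_zero : v₀ = 0 := by
    have h := heval 0
    simpa [mulVec_neg, hv₀, ← constantCoeff_eq, hp₀, eq_comm, constantCoeff_eq] using h
  refine ⟨P, hsymm, hidem, fun x ↦ ?_⟩
  rw [heval, hv₀_zero, sub_zero, dotProduct_mulVec, ← mulVec_transpose, hsymm.eq, mulVec_mulVec,
    hidem.eq, dotProduct_comm]

end Quadratic

section FiberWeight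

variable {ι κ R : Type*} [CommSemiring R]

/-- The weight on `ι ⊕ κ` for which the weighted degree of a polynomial is its total degree in the
variables indexed by `κ`. -/
def fiberWeight (ι κ : Type*) : ι ⊕ κ → ℕ := Sum.elim 0 1

@[simp]
lemma fiberWeight_inl (i : ι) : fiberWeight ι κ (Sum.inl i) = 0 := rfl

@[simp]
lemma fiberWeight_inr (α : κ) : fiberWeight ι κ (Sum.inr α) = 1 := rfl

lemma exists_rename_inl_eq_of_mem_weightedDegreeLE_zero {p : MvPolynomial (ι ⊕ κ) R}
    (hp : p ∈ weightedDegreeLE R (fiberWeight ι κ) 0) :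
    ∃ q : MvPolynomial ι R, rename Sum.inl q = p := by
  refine exists_rename_eq_of_vars_subset_range p Sum.inl Sum.inl_injective fun j hj ↦ ?_
  rcases j with i | α
  · exact ⟨i, rfl⟩
  · exact absurd (weightedDegreeLE.weight_eq_zero_of_mem_vars hp hj) one_ne_zero

lemma rename_inl_mem_weightedDegreeLE (q : MvPolynomial ι R) (N : ℕ) :
    rename Sum.inl q ∈ weightedDegreeLE R (fiberWeight ι κ) N := by
  classical
  refine weightedDegreeLE.mem_iff.2 fun d hd ↦ ?_
  obtain ⟨u, rfl, -⟩ := coeff_rename_ne_zero _ _ _ (mem_support_iff.1 hd)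
  simp [Finsupp.weight_apply, Finsupp.sum_mapDomain_index]

lemma pderiv_inr_rename_inl (α : κ) (q : MvPolynomial ι R) :
    pderiv (Sum.inr α) (rename Sum.inl q : MvPolynomial (ι ⊕ κ) R) = 0 := by
  classical
  exact pderiv_eq_zero_of_notMem_vars fun h ↦ by simpa using vars_rename _ _ h

end FiberWeight

lemma exists_eq_sum_X_mul_rename_add {ι κ R : Type*} [Fintype κ] [CommRing R] [NoZeroDivisors R]
    [CharZero R] {p : MvPolynomial (ι ⊕ κ) R}
    (hp : p ∈ weightedDegreeLE R (fiberWeight ι κ) 1) :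
    ∃ (a : κ → MvPolynomial ι R) (d : MvPolynomial ι R),
      p = ∑ α, X (Sum.inr α) * rename Sum.inl (a α) + rename Sum.inl d := by
  classical
  choose a ha using fun α ↦ exists_rename_inl_eq_of_mem_weightedDegreeLE_zero
    (weightedDegreeLE.pderiv_mem (Sum.inr α) hp le_rfl)
  obtain ⟨d, hd⟩ := exists_rename_eq_of_pderiv_eq_zero
    (p := p - ∑ α, X (Sum.inr α) * rename Sum.inl (a α)) Sum.inl_injective fun j hj ↦ by
      rcases j with i | γ
      · exact absurd ⟨i, rfl⟩ hj
      · simp [pderiv_inr_rename_inl, pderiv_X, Pi.single_apply, ha γ]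
  exact ⟨a, d, by rw [hd, add_sub_cancel]⟩

section HorizontalDerivation

variable {ι κ R : Type*} [Fintype κ] [CommRing R]

/-- The left-invariant vector field `∂_i - ∑ α, β i α • ∂_α` on a two-step group, where the
polynomial coefficients `β i α` depend on the base variables `ι` only. -/
def horizontalDeriv (β : ι → κ → MvPolynomial ι R) (i : ι) :
    Derivation R (MvPolynomial (ι ⊕ κ) R) (MvPolynomial (ι ⊕ κ) R) :=
  pderiv (Sum.inl i) - ∑ α, (rename Sum.inl (β i α) : MvPolynomial (ι ⊕ κ) R) • pderiv (Sum.inr α)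

variable {β : ι → κ → MvPolynomial ι R} {M N : ℕ} {p q : MvPolynomial (ι ⊕ κ) R}

lemma horizontalDeriv_apply (i : ι) (p : MvPolynomial (ι ⊕ κ) R) :
    horizontalDeriv β i p =
      pderiv (Sum.inl i) p - ∑ α, rename Sum.inl (β i α) * pderiv (Sum.inr α) p := by
  rw [horizontalDeriv, Derivation.sub_apply]
  exact congrArg _ <|
    map_sum ((Pi.evalAddMonoidHom _ p).comp Derivation.coeFnAddMonoidHom) _ Finset.univ

lemma horizontalDeriv_rename_inl (i : ι) (q : MvPolynomial ι R) :
    horizontalDeriv β i (rename Sum.inl q : MvPolynomial (ι ⊕ κ) R) =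
      rename Sum.inl (pderiv i q) := by
  simp [horizontalDeriv_apply, pderiv_inr_rename_inl, pderiv_rename Sum.inl_injective]

lemma horizontalDeriv_mem (i : ι) (hp : p ∈ weightedDegreeLE R (fiberWeight ι κ) N) :
    horizontalDeriv β i p ∈ weightedDegreeLE R (fiberWeight ι κ) N := by
  rw [horizontalDeriv_apply]
  refine Submodule.sub_mem _ (weightedDegreeLE.pderiv_mem _ hp le_self_add)
    (Submodule.sum_mem _ fun α _ ↦ ?_)
  rw [← zero_add N]
  exact weightedDegreeLE.mul_mem (rename_inl_mem_weightedDegreeLE _ 0)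
    (weightedDegreeLE.pderiv_mem _ hp le_self_add)

lemma weightedHomogeneousComponent_horizontalDeriv (i : ι)
    (hp : p ∈ weightedDegreeLE R (fiberWeight ι κ) N) :
    weightedHomogeneousComponent (fiberWeight ι κ) N (horizontalDeriv β i p) =
      pderiv (Sum.inl i) (weightedHomogeneousComponent (fiberWeight ι κ) N p) := by
  have hvert (α : κ) : weightedHomogeneousComponent (fiberWeight ι κ) N
      (rename Sum.inl (β i α) * pderiv (Sum.inr α) p) = 0 := by
    have hmul := weightedDegreeLE.component_mul
      (rename_inl_mem_weightedDegreeLE (κ := κ) (β i α) 0)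
      (weightedDegreeLE.pderiv_mem (Sum.inr α) hp le_self_add)
    rw [zero_add] at hmul
    rw [hmul, weightedHomogeneousComponent_pderiv, fiberWeight_inr,
      weightedDegreeLE.component_eq_zero hp (lt_add_one N), map_zero, mul_zero]
  rw [horizontalDeriv_apply, map_sub, map_sum, Finset.sum_eq_zero fun α _ ↦ hvert α, sub_zero,
    weightedHomogeneousComponent_pderiv, fiberWeight_inl, add_zero]

variable [Fintype ι]

lemma gradPairing_horizontalDeriv_rename_inl (p q : MvPolynomial ι R) :
    gradPairing (horizontalDeriv β) (rename Sum.inl p : MvPolynomial (ι ⊕ κ) R) (rename Sum.inl q) =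
      rename Sum.inl (gradPairing pderiv p q) := by
  simp [gradPairing_apply, horizontalDeriv_rename_inl]

lemma gradPairing_horizontalDeriv_mem (hp : p ∈ weightedDegreeLE R (fiberWeight ι κ) M)
    (hq : q ∈ weightedDegreeLE R (fiberWeight ι κ) N) :
    gradPairing (horizontalDeriv β) p q ∈ weightedDegreeLE R (fiberWeight ι κ) (M + N) := by
  rw [gradPairing_apply]
  exact Submodule.sum_mem _ fun i _ ↦
    weightedDegreeLE.mul_mem (horizontalDeriv_mem i hp) (horizontalDeriv_mem i hq)

lemma weightedHomogeneousComponent_gradPairing_horizontalDeriv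
    (hp : p ∈ weightedDegreeLE R (fiberWeight ι κ) M)
    (hq : q ∈ weightedDegreeLE R (fiberWeight ι κ) N) :
    weightedHomogeneousComponent (fiberWeight ι κ) (M + N) (gradPairing (horizontalDeriv β) p q) =
      gradPairing (fun i : ι ↦ pderiv (Sum.inl i))
        (weightedHomogeneousComponent (fiberWeight ι κ) M p)
        (weightedHomogeneousComponent (fiberWeight ι κ) N q) := by
  simp only [gradPairing_apply, map_sum]
  refine Finset.sum_congr rfl fun i _ ↦ ?_
  rw [weightedDegreeLE.component_mul (horizontalDeriv_mem i hp) (horizontalDeriv_mem i hq),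
    weightedHomogeneousComponent_horizontalDeriv i hp,
    weightedHomogeneousComponent_horizontalDeriv i hq]

end HorizontalDerivation

section CoefficientEquations

open Matrix

variable {ι κ K : Type*} [Fintype ι] [Fintype κ]

/-- The conditions on `A`, `B`, `D` expressing that `G = A t² + B t + D` satisfies
`-2 G ∂ₜG + ∑ᵢ (Xᵢ G)² + t (∑_α (∂_α G)² + (∂ₜG)²) = b₁ G + b₀ t`, where `X = horizontalDeriv β`;
the field named after `k` is the comparison of the coefficients of `t ^ k`. -/
structure TransnormalCoeffs [CommRing K] (β : ι → κ → MvPolynomial ι K)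
    (A B D : MvPolynomial (ι ⊕ κ) K) (b₁ b₀ : K) : Prop where
  coeff_five : gradPairing (fun α : κ ↦ pderiv (Sum.inr α)) A A = 0
  coeff_four : gradPairing (horizontalDeriv β) A A
    + 2 * gradPairing (fun α : κ ↦ pderiv (Sum.inr α)) A B = 0
  coeff_three : 2 * gradPairing (horizontalDeriv β) A B
    + gradPairing (fun α : κ ↦ pderiv (Sum.inr α)) B B
    + 2 * gradPairing (fun α : κ ↦ pderiv (Sum.inr α)) A D = 0
  coeff_two : -(2 * (A * B)) + gradPairing (horizontalDeriv β) B B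
    + 2 * gradPairing (horizontalDeriv β) A D
    + 2 * gradPairing (fun α : κ ↦ pderiv (Sum.inr α)) B D = b₁ • A
  coeff_one : -(B * B) - 4 * (A * D) + 2 * gradPairing (horizontalDeriv β) B D
    + gradPairing (fun α : κ ↦ pderiv (Sum.inr α)) D D = b₁ • B + C b₀
  coeff_zero : -(2 * (B * D)) + gradPairing (horizontalDeriv β) D D = b₁ • D

namespace TransnormalCoeffs

section CommRing

variable [CommRing K] {β : ι → κ → MvPolynomial ι K} {B : MvPolynomial ι K}
  {D : MvPolynomial (ι ⊕ κ) K} {c b₁ b₀ : K}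

lemma gradPairing_linearCoeff (h : TransnormalCoeffs β (C c) (rename Sum.inl B) D b₁ b₀) :
    gradPairing pderiv B B = 2 * (C c * B) + b₁ • C c := by
  have hcoeff := h.coeff_two
  rw [gradPairing_horizontalDeriv_rename_inl,
    gradPairing_eq_zero_of_left _ (p := C c) (fun i ↦ Derivation.map_algebraMap _ c),
    gradPairing_eq_zero_of_left _ (fun α ↦ pderiv_inr_rename_inl α B)] at hcoeff
  refine rename_injective (Sum.inl : ι → ι ⊕ κ) Sum.inl_injective ?_
  simp only [map_add, map_mul, map_ofNat, map_smul, rename_C]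
  linear_combination hcoeff

lemma gradPairing_inr_constCoeff (h : TransnormalCoeffs β (C c) (rename Sum.inl B) D b₁ b₀) :
    gradPairing (fun α : κ ↦ pderiv (Sum.inr α)) D D =
      rename Sum.inl (b₁ • B + C b₀ + B * B) + (4 * c) • D
        - (2 : K) • gradPairing (horizontalDeriv β) (rename Sum.inl B) D := by
  have hcoeff := h.coeff_one
  simp only [smul_eq_C_mul, map_add, map_mul, map_ofNat, rename_C] at hcoeff ⊢
  linear_combination hcoeff

end CommRing

variable [Field K] [LinearOrder K] [IsStrictOrderedRing K] {β : ι → κ → MvPolynomial ι K}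
  {A B D : MvPolynomial (ι ⊕ κ) K} {c b₁ b₀ : K}

lemma eq_C (h : TransnormalCoeffs β A B D b₁ b₀) : A = C (coeff 0 A) := by
  have hvert := eq_zero_of_gradPairing_self_eq_zero h.coeff_five
  have hhor : gradPairing (horizontalDeriv β) A A = 0 := by
    simpa [gradPairing_eq_zero_of_left _ hvert] using h.coeff_four
  refine eq_C_of_pderiv_eq_zero fun j ↦ ?_
  rcases j with i | α
  · simpa [horizontalDeriv_apply, hvert] using eq_zero_of_gradPairing_self_eq_zero hhor i
  · exact hvert α

lemma exists_rename_inl_eq (h : TransnormalCoeffs β (C c) B D b₁ b₀) :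
    ∃ B' : MvPolynomial ι K, rename Sum.inl B' = B := by
  have hB : gradPairing (fun α : κ ↦ pderiv (Sum.inr α)) B B = 0 := by
    simpa [gradPairing_eq_zero_of_left] using h.coeff_three
  refine exists_rename_eq_of_pderiv_eq_zero Sum.inl_injective fun j hj ↦ ?_
  rcases j with i | α
  · exact absurd ⟨i, rfl⟩ hj
  · exact eq_zero_of_gradPairing_self_eq_zero hB α

variable {B : MvPolynomial ι K}

theorem exists_eval_linearCoeff_eq (h : TransnormalCoeffs β (C c) (rename Sum.inl B) D b₁ b₀)
    (hc : c ≠ 0) : ∃ P : Matrix ι ι K, P.IsSymm ∧ IsIdempotentElem P ∧ ∃ v₀, P *ᵥ v₀ = v₀ ∧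
      ∀ v, eval v B = c * (1 / 2 * (P *ᵥ (v - v₀) ⬝ᵥ P *ᵥ (v - v₀) - b₁ / c)) := by
  set p : MvPolynomial ι K := c⁻¹ • (B + C (b₁ / 2)) with hp
  have hgrad : gradPairing pderiv p p = (2 : K) • p := by
    have hB : gradPairing pderiv p p = c⁻¹ • c⁻¹ • gradPairing pderiv B B := by
      simp [hp, gradPairing_apply, Finset.smul_sum]
    rw [hB, h.gradPairing_linearCoeff, hp]
    refine MvPolynomial.funext fun x ↦ ?_
    simp only [smul_add, map_add, smul_eval, map_mul, eval_ofNat, eval_C]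
    field_simp
  obtain ⟨P, hsymm, hidem, v₀, hv₀, heval⟩ := exists_projection_of_gradPairing_self hgrad
  refine ⟨P, hsymm, hidem, v₀, hv₀, fun v ↦ ?_⟩
  have hv := heval v
  simp only [hp, smul_eval, map_add, eval_C] at hv
  field_simp at hv ⊢
  linear_combination hv

lemma constCoeff_mem_weightedDegreeLE_two
    (h : TransnormalCoeffs β (C c) (rename Sum.inl B) D b₁ b₀) :
    D ∈ weightedDegreeLE K (fiberWeight ι κ) 2 := by
  refine mem_weightedDegreeLE_two_of_gradPairing_mem (e := Sum.inr) (fun _ ↦ rfl) ?_ fun N hD ↦ ?_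
  · rintro (i | α) hj
    · rfl
    · exact absurd ⟨α, rfl⟩ hj
  · have hcross := gradPairing_horizontalDeriv_mem (β := β)
      (rename_inl_mem_weightedDegreeLE B 0) hD
    rw [zero_add] at hcross
    rw [h.gradPairing_inr_constCoeff]
    exact sub_mem (add_mem (rename_inl_mem_weightedDegreeLE _ N) (Submodule.smul_mem _ _ hD))
      (Submodule.smul_mem _ _ hcross)

lemma pderiv_inl_component_two_constCoeff
    (h : TransnormalCoeffs β (C c) (rename Sum.inl B) D b₁ b₀) (i : ι) :
    pderiv (Sum.inl i) (weightedHomogeneousComponent (fiberWeight ι κ) 2 D) = 0 := by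
  have hD := h.constCoeff_mem_weightedDegreeLE_two
  have hBD := weightedDegreeLE.mul_mem (rename_inl_mem_weightedDegreeLE B 0) hD
  have hmem : gradPairing (horizontalDeriv β) D D ∈ weightedDegreeLE K (fiberWeight ι κ) 2 := by
    rw [show gradPairing (horizontalDeriv β) D D = b₁ • D + (2 : K) • (rename Sum.inl B * D) by
      rw [← h.coeff_zero, smul_eq_C_mul _ (2 : K), map_ofNat]; ring]
    exact add_mem (Submodule.smul_mem _ _ hD) (Submodule.smul_mem _ _ hBD)
  have htop := weightedHomogeneousComponent_gradPairing_horizontalDeriv (β := β) hD hD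
  rw [weightedDegreeLE.component_eq_zero hmem (by simp)] at htop
  exact eq_zero_of_gradPairing_self_eq_zero htop.symm i

lemma gradPairing_inr_component_two_constCoeff
    (h : TransnormalCoeffs β (C c) (rename Sum.inl B) D b₁ b₀) :
    gradPairing (fun α : κ ↦ pderiv (Sum.inr α))
        (weightedHomogeneousComponent (fiberWeight ι κ) 2 D)
        (weightedHomogeneousComponent (fiberWeight ι κ) 2 D) =
      (4 * c) • weightedHomogeneousComponent (fiberWeight ι κ) 2 D := by
  have hD := h.constCoeff_mem_weightedDegreeLE_two
  have hcross := weightedHomogeneousComponent_gradPairing_horizontalDeriv (β := β)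
    (rename_inl_mem_weightedDegreeLE B 0) hD
  rw [gradPairing_comm fun i : ι ↦ pderiv (Sum.inl i),
    gradPairing_eq_zero_of_left _ h.pderiv_inl_component_two_constCoeff,
    zero_add] at hcross
  rw [← weightedHomogeneousComponent_gradPairing (M := 1) (N := 1) fiberWeight_inr hD hD,
    h.gradPairing_inr_constCoeff, map_sub, map_add, map_smul, map_smul, hcross,
    weightedDegreeLE.component_eq_zero (rename_inl_mem_weightedDegreeLE _ 0) (by simp),
    smul_zero, sub_zero, zero_add]

theorem exists_eval_component_two_constCoeff_eq
    (h : TransnormalCoeffs β (C c) (rename Sum.inl B) D b₁ b₀) (hc : c ≠ 0) :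
    ∃ P : Matrix κ κ K, P.IsSymm ∧ IsIdempotentElem P ∧ ∀ v z,
      eval (Sum.elim v z) (weightedHomogeneousComponent (fiberWeight ι κ) 2 D) =
        c * (z ⬝ᵥ P *ᵥ z) := by
  obtain ⟨q, hq⟩ := exists_rename_eq_of_pderiv_eq_zero
    (p := weightedHomogeneousComponent (fiberWeight ι κ) 2 D) Sum.inr_injective fun j hj ↦ by
      rcases j with i | α
      · exact h.pderiv_inl_component_two_constCoeff i
      · exact absurd ⟨α, rfl⟩ hj
  have hq_grad : gradPairing pderiv q q = (4 * c) • q := by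
    refine rename_injective (Sum.inr : κ → ι ⊕ κ) Sum.inr_injective ?_
    rw [← gradPairing_rename Sum.inr_injective, map_smul, hq,
      h.gradPairing_inr_component_two_constCoeff]
  have hq_zero : coeff 0 q = 0 := by
    rw [← constantCoeff_eq, ← constantCoeff_rename (Sum.inr : κ → ι ⊕ κ), hq, constantCoeff_eq,
      coeff_weightedHomogeneousComponent]
    simp
  obtain ⟨P, hsymm, hidem, heval⟩ := exists_projection_of_gradPairing_self_of_coeff_zero
    (p := (2 * c)⁻¹ • q)
    (by
      simp only [map_smul, LinearMap.smul_apply, hq_grad, smul_smul]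
      congr 1
      field)
    (by rw [coeff_smul, hq_zero, smul_zero])
  refine ⟨P, hsymm, hidem, fun v z ↦ ?_⟩
  have hz := heval z
  rw [smul_eval] at hz
  rw [← hq, eval_rename, Sum.elim_comp_inr]
  field_simp at hz
  exact hz

theorem exists_eval_constCoeff_eq
    (h : TransnormalCoeffs β (C c) (rename Sum.inl B) D b₁ b₀) (hc : c ≠ 0) :
    ∃ P : Matrix κ κ K, P.IsSymm ∧ IsIdempotentElem P ∧
      ∃ (a : κ → MvPolynomial ι K) (d : MvPolynomial ι K), ∀ v z,
        eval (Sum.elim v z) D = c * (z ⬝ᵥ P *ᵥ z + ∑ α, eval v (a α) * z α + eval v d) := by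
  obtain ⟨P, hsymm, hidem, hquad⟩ := h.exists_eval_component_two_constCoeff_eq hc
  set D₂ := weightedHomogeneousComponent (fiberWeight ι κ) 2 D
  have hD₂_hom : IsWeightedHomogeneous (fiberWeight ι κ) D₂ 2 :=
    weightedHomogeneousComponent_isWeightedHomogeneous 2 D
  have hlow : D - D₂ ∈ weightedDegreeLE K (fiberWeight ι κ) 1 := by
    refine weightedDegreeLE.mem_of_component_eq_zero
      (sub_mem h.constCoeff_mem_weightedDegreeLE_two fun d hd ↦
        (hD₂_hom (mem_support_iff.1 hd)).le) ?_
    rw [map_sub, hD₂_hom.weightedHomogeneousComponent_same, sub_self]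
  obtain ⟨a, d, had⟩ := exists_eq_sum_X_mul_rename_add hlow
  refine ⟨P, hsymm, hidem, fun α ↦ c⁻¹ • a α, c⁻¹ • d, fun v z ↦ ?_⟩
  rw [← sub_add_cancel D D₂, had, map_add, hquad]
  simp only [map_add, map_sum, map_mul, eval_X, eval_rename, Sum.elim_inr, Sum.elim_comp_inl,
    smul_eval, mul_assoc, ← Finset.mul_sum]
  field_simp
  simp only [mul_comm (z _)]
  ring

end TransnormalCoeffs

end CoefficientEquations

section TimeCoefficients

lemma eq_zero_of_forall_pos_sum_pow_smul_eq_zero {σ K : Type*} [Field K] [LinearOrder K]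
    [IsStrictOrderedRing K] {N : ℕ} {a : Fin N → MvPolynomial σ K}
    (h : ∀ t : K, 0 < t → ∑ k : Fin N, t ^ (k : ℕ) • a k = 0) : a = 0 := by
  refine Matrix.eq_zero_of_forall_index_sum_pow_mul_eq_zero
    (f := fun j ↦ C ((j : K) + 1)) (fun i j hij ↦ ?_) fun j ↦ ?_
  · simpa [Fin.ext_iff] using hij
  · simpa [smul_eq_C_mul] using h (j + 1) (by positivity)

theorem TransnormalCoeffs.of_forall_pos {ι κ K : Type*} [Fintype ι] [Fintype κ] [Field K]
    [LinearOrder K] [IsStrictOrderedRing K] {β : ι → κ → MvPolynomial ι K}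
    {A B D : MvPolynomial (ι ⊕ κ) K} {b₁ b₀ : K} {g g' : K → MvPolynomial (ι ⊕ κ) K}
    (hg : ∀ t, g t = t ^ 2 • A + t • B + D) (hg' : ∀ t, g' t = (2 * t) • A + B)
    (h : ∀ t, 0 < t → -2 * (g t * g' t) + gradPairing (horizontalDeriv β) (g t) (g t)
      + t • (gradPairing (fun α : κ ↦ pderiv (Sum.inr α)) (g t) (g t) + g' t * g' t)
        = b₁ • g t + t • C b₀) :
    TransnormalCoeffs β A B D b₁ b₀ := by
  set Γh := gradPairing (horizontalDeriv β)
  set Γv := gradPairing (fun α : κ ↦ (pderiv (Sum.inr α) :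
    Derivation K (MvPolynomial (ι ⊕ κ) K) (MvPolynomial (ι ⊕ κ) K)))
  have hzero := eq_zero_of_forall_pos_sum_pow_smul_eq_zero (a := ![
    -(2 * (B * D)) + Γh D D - b₁ • D,
    -(B * B) - 4 * (A * D) + 2 * Γh B D + Γv D D - (b₁ • B + C b₀),
    -(2 * (A * B)) + Γh B B + 2 * Γh A D + 2 * Γv B D - b₁ • A,
    2 * Γh A B + Γv B B + 2 * Γv A D,
    Γh A A + 2 * Γv A B,
    Γv A A]) fun t ht ↦ by
    have ht' := h t ht
    have hBA : Γh B A = Γh A B := gradPairing_comm _ _ _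
    have hDA : Γh D A = Γh A D := gradPairing_comm _ _ _
    have hDB : Γh D B = Γh B D := gradPairing_comm _ _ _
    have hBA' : Γv B A = Γv A B := gradPairing_comm _ _ _
    have hDA' : Γv D A = Γv A D := gradPairing_comm _ _ _
    have hDB' : Γv D B = Γv B D := gradPairing_comm _ _ _
    simp only [hg, hg', map_add, map_smul, LinearMap.add_apply, LinearMap.smul_apply, hBA, hDA,
      hDB, hBA', hDA', hDB'] at ht'
    simp only [smul_eq_C_mul, map_mul, map_pow, map_ofNat] at ht'
    simp only [Fin.sum_univ_six, smul_eq_C_mul, map_pow, Fin.coe_ofNat_eq_mod,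
      Matrix.cons_val]
    linear_combination ht'
  exact ⟨congrFun hzero 5, congrFun hzero 4, congrFun hzero 3, sub_eq_zero.1 (congrFun hzero 2),
    sub_eq_zero.1 (congrFun hzero 1), sub_eq_zero.1 (congrFun hzero 0)⟩

section Option

variable {σ R : Type*} [CommSemiring R]

lemma derivative_optionEquivLeft (p : MvPolynomial (Option σ) R) :
    (optionEquivLeft R σ p).derivative = optionEquivLeft R σ (pderiv none p) := by
  classical
  induction p using MvPolynomial.induction_on with
  | C a => simp
  | add p q hp hq => simp [hp, hq]
  | mul_X p j hp => cases j <;> simp [hp, pderiv_X, mul_comm]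

lemma pderiv_eval_C_optionEquivLeft (a : σ) (t : R) (p : MvPolynomial (Option σ) R) :
    pderiv a ((optionEquivLeft R σ p).eval (C t)) =
      (optionEquivLeft R σ (pderiv (some a) p)).eval (C t) := by
  classical
  induction p using MvPolynomial.induction_on with
  | C a => simp
  | add p q hp hq => simp [hp, hq]
  | mul_X p j hp =>
    rcases j with - | b
    · simp [hp, pderiv_X]
    · rcases eq_or_ne a b with rfl | hab
      · simp [hp, pderiv_X]
      · simp [hp, pderiv_X, hab]

end Option

/-- `q` regarded as a polynomial in the last variable `t`. -/
def timePoly {ι κ R : Type*} [CommSemiring R] (q : MvPolynomial (ι ⊕ κ ⊕ Unit) R) :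
    Polynomial (MvPolynomial (ι ⊕ κ) R) :=
  optionEquivLeft R (ι ⊕ κ)
    (rename ((Equiv.sumAssoc ι κ Unit).symm.trans (Equiv.optionEquivSumPUnit _).symm) q)

section TimePoly

variable {ι κ R : Type*} [CommSemiring R] (q : MvPolynomial (ι ⊕ κ ⊕ Unit) R)

lemma natDegree_timePoly : (timePoly q).natDegree = degreeOf (Sum.inr (Sum.inr ())) q := by
  rw [timePoly, natDegree_optionEquivLeft]
  exact degreeOf_rename_of_injective
    ((Equiv.sumAssoc ι κ Unit).symm.trans (Equiv.optionEquivSumPUnit _).symm).injective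
    (Sum.inr (Sum.inr ()))

lemma derivative_timePoly :
    (timePoly q).derivative = timePoly (pderiv (Sum.inr (Sum.inr ())) q) := by
  rw [timePoly, timePoly, derivative_optionEquivLeft, ← pderiv_rename (Equiv.injective _)]
  rfl

lemma pderiv_inl_eval_timePoly (i : ι) (t : R) :
    pderiv (Sum.inl i) ((timePoly q).eval (C t)) =
      (timePoly (pderiv (Sum.inl i) q)).eval (C t) := by
  rw [timePoly, timePoly, pderiv_eval_C_optionEquivLeft, ← pderiv_rename (Equiv.injective _)]
  rfl

lemma pderiv_inr_eval_timePoly (α : κ) (t : R) :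
    pderiv (Sum.inr α) ((timePoly q).eval (C t)) =
      (timePoly (pderiv (Sum.inr (Sum.inl α)) q)).eval (C t) := by
  rw [timePoly, timePoly, pderiv_eval_C_optionEquivLeft, ← pderiv_rename (Equiv.injective _)]
  rfl

end TimePoly

lemma evp_eq_eval_timePoly {n m : ℕ} (q : MvPolynomial (Fin n ⊕ Fin m ⊕ Unit) ℝ)
    (v : Fin n → ℝ) (z : Fin m → ℝ) (t : ℝ) :
    evp q v z t = eval (Sum.elim v z) ((timePoly q).eval (C t)) := by
  have helim := optionEquivLeft_elim_eval ℝ (Fin n ⊕ Fin m) (Sum.elim v z) t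
    (rename ((Equiv.sumAssoc _ _ _).symm.trans (Equiv.optionEquivSumPUnit _).symm) q)
  rw [Polynomial.eval_map] at helim
  rw [timePoly, ← Polynomial.eval₂_at_apply, eval_C, ← helim, evp, eval_rename]
  congr 2
  ext (i | α | _) <;> simp

end TimeCoefficients
section Transnormal

/-- The polynomial function `v ↦ ½ [eᵢ, v]_α`. -/
def bracketCoeff {n m : ℕ} (br : (Fin n → ℝ) →ₗ[ℝ] (Fin n → ℝ) →ₗ[ℝ] (Fin m → ℝ))
    (i : Fin n) (α : Fin m) : MvPolynomial (Fin n) ℝ :=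
  C (1 / 2) * ∑ j, C (br (Pi.single i 1) (Pi.single j 1) α) * X j

variable {n m : ℕ} {br : (Fin n → ℝ) →ₗ[ℝ] (Fin n → ℝ) →ₗ[ℝ] (Fin m → ℝ)}
  {G : MvPolynomial (Fin n ⊕ Fin m ⊕ Unit) ℝ} {b₁ b₀ : ℝ}

lemma eval_bracketCoeff (i : Fin n) (α : Fin m) (v : Fin n → ℝ) :
    eval v (bracketCoeff br i α) = 1 / 2 * br (Pi.single i 1) v α := by
  conv_rhs => rw [pi_eq_sum_univ' v, map_sum]
  simp [bracketCoeff, mul_comm]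

lemma eval_horizontalDeriv_bracketCoeff_timePoly (i : Fin n) (v : Fin n → ℝ) (z : Fin m → ℝ)
    (t : ℝ) :
    eval (Sum.elim v z) (horizontalDeriv (bracketCoeff br) i ((timePoly G).eval (C t))) =
      evp (pderiv (Sum.inl i) G) v z t - 1 / 2 * ∑ α,
        br (Pi.single i 1) v α * evp (pderiv (Sum.inr (Sum.inl α)) G) v z t := by
  simp only [horizontalDeriv_apply, map_sub, map_sum, map_mul, eval_rename, Sum.elim_comp_inl,
    eval_bracketCoeff, pderiv_inl_eval_timePoly, pderiv_inr_eval_timePoly,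
    ← evp_eq_eval_timePoly, Finset.mul_sum, mul_assoc]

lemma Transnormal.eval_timePoly (h : Transnormal n m br G b₁ b₀) {t : ℝ} (ht : 0 < t) :
    -2 * ((timePoly G).eval (C t) * (timePoly G).derivative.eval (C t))
      + gradPairing (horizontalDeriv (bracketCoeff br))
          ((timePoly G).eval (C t)) ((timePoly G).eval (C t))
      + t • (gradPairing (fun α ↦ pderiv (Sum.inr α))
          ((timePoly G).eval (C t)) ((timePoly G).eval (C t))
        + (timePoly G).derivative.eval (C t) * (timePoly G).derivative.eval (C t))
      = b₁ • (timePoly G).eval (C t) + t • C b₀ := by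
  refine MvPolynomial.funext fun x ↦ ?_
  obtain ⟨v, z, rfl⟩ : ∃ v z, x = Sum.elim v z := ⟨_, _, (Sum.elim_comp_inl_inr x).symm⟩
  have hpt := h v z t ht
  simp only [gradPairing_apply, derivative_timePoly, pderiv_inr_eval_timePoly, map_add, map_mul,
    map_neg, map_ofNat, map_sum, smul_eval, eval_C, eval_horizontalDeriv_bracketCoeff_timePoly,
    ← evp_eq_eval_timePoly, ← pow_two (_ : ℝ)]
  field_simp at hpt ⊢
  linear_combination hpt

theorem Transnormal.exists_transnormalCoeffs (h : Transnormal n m br G b₁ b₀)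
    (hdeg : degreeOf (Sum.inr (Sum.inr ())) G = 2) :
    ∃ A B D, A ≠ 0 ∧ TransnormalCoeffs (bracketCoeff br) A B D b₁ b₀ ∧ ∀ v z t,
      evp G v z t = eval (Sum.elim v z) A * t ^ 2 + eval (Sum.elim v z) B * t
        + eval (Sum.elim v z) D := by
  have hdeg' : (timePoly G).natDegree = 2 := (natDegree_timePoly G).trans hdeg
  have hquad := Polynomial.eq_quadratic_of_degree_le_two
    (Polynomial.natDegree_le_iff_degree_le.1 hdeg'.le)
  set A := (timePoly G).coeff 2 with hA
  set B := (timePoly G).coeff 1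
  set D := (timePoly G).coeff 0
  have heval (t : ℝ) : (timePoly G).eval (C t) = t ^ 2 • A + t • B + D := by
    rw [hquad]
    simp only [Polynomial.eval_add, Polynomial.eval_mul, Polynomial.eval_C, Polynomial.eval_pow,
      Polynomial.eval_X, smul_eq_C_mul, C_pow]
    ring
  have hderiv (t : ℝ) : (timePoly G).derivative.eval (C t) = (2 * t) • A + B := by
    rw [hquad]
    simp only [Polynomial.derivative_add, Polynomial.derivative_C_mul,
      Polynomial.derivative_X_sq, Polynomial.derivative_X, Polynomial.derivative_C,
      Polynomial.eval_add, Polynomial.eval_mul, Polynomial.eval_C, Polynomial.eval_X,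
      Polynomial.eval_one, Polynomial.eval_zero, Polynomial.eval_ofNat, smul_eq_C_mul, C_mul,
      map_ofNat]
    ring
  refine ⟨A, B, D, ?_, .of_forall_pos heval hderiv fun t ht ↦ h.eval_timePoly ht, fun v z t ↦ ?_⟩
  · rw [hA, ← hdeg', Polynomial.coeff_natDegree, Polynomial.leadingCoeff_ne_zero]
    exact Polynomial.ne_zero_of_natDegree_gt (n := 0) (by simp [hdeg'])
  · rw [evp_eq_eval_timePoly, heval]
    simp [smul_eval, mul_comm]

end Transnormal

section Projection

open Matrix

variable {k : ℕ} {P : Matrix (Fin k) (Fin k) ℝ}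

lemma mulVecLin_comp_self_of_isIdempotentElem (hP : IsIdempotentElem P) :
    P.mulVecLin ∘ₗ P.mulVecLin = P.mulVecLin := by
  rw [← Matrix.mulVecLin_mul, hP.eq]

lemma dotR_mulVecLin_comm_of_isSymm (hP : P.IsSymm) (u w : Fin k → ℝ) :
    dotR (P.mulVecLin u) w = dotR u (P.mulVecLin w) := by
  change P *ᵥ u ⬝ᵥ w = u ⬝ᵥ P *ᵥ w
  rw [dotProduct_mulVec, ← mulVec_transpose, hP.eq]

end Projection

theorem stmt_7_general (n m : ℕ)
    (br : (Fin n → ℝ) →ₗ[ℝ] (Fin n → ℝ) →ₗ[ℝ] (Fin m → ℝ))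
    (G : MvPolynomial (Fin n ⊕ Fin m ⊕ Unit) ℝ)
    (hdeg : MvPolynomial.degreeOf (Sum.inr (Sum.inr ())) G = 2)
    (b₁ b₀ : ℝ) (htrans : Transnormal n m br G b₁ b₀) :
    ∃ c : ℝ, c ≠ 0 ∧ ∃ β : ℝ,
      ∃ Pw : (Fin n → ℝ) →ₗ[ℝ] (Fin n → ℝ), Pw ∘ₗ Pw = Pw ∧
        (∀ u w : Fin n → ℝ, dotR (Pw u) w = dotR u (Pw w)) ∧
      ∃ v₀ : Fin n → ℝ, Pw v₀ = v₀ ∧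
      ∃ Py : (Fin m → ℝ) →ₗ[ℝ] (Fin m → ℝ), Py ∘ₗ Py = Py ∧
        (∀ u w : Fin m → ℝ, dotR (Py u) w = dotR u (Py w)) ∧
      ∃ cp : Fin m → MvPolynomial (Fin n) ℝ, ∃ d : MvPolynomial (Fin n) ℝ,
        ∀ (v : Fin n → ℝ) (z : Fin m → ℝ) (t : ℝ),
          evp G v z t = c * (t ^ 2
            + (1 / 2) * (dotR (Pw (v - v₀)) (Pw (v - v₀)) - β) * t
            + dotR z (Py z)
            + (∑ α : Fin m, MvPolynomial.eval v (cp α) * z α)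
            + MvPolynomial.eval v d) := by
  obtain ⟨A, B, D, hA, hcoeffs, hG⟩ := htrans.exists_transnormalCoeffs hdeg
  obtain ⟨c, rfl⟩ : ∃ c, A = C c := ⟨_, hcoeffs.eq_C⟩
  have hc : c ≠ 0 := fun h ↦ hA (by rw [h, C_0])
  obtain ⟨B, rfl⟩ := hcoeffs.exists_rename_inl_eq
  obtain ⟨Pw, hPw_symm, hPw_idem, v₀, hv₀, hB⟩ := hcoeffs.exists_eval_linearCoeff_eq hc
  obtain ⟨Py, hPy_symm, hPy_idem, cp, d, hD⟩ := hcoeffs.exists_eval_constCoeff_eq hc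
  refine ⟨c, hc, b₁ / c,
    Pw.mulVecLin, mulVecLin_comp_self_of_isIdempotentElem hPw_idem,
    dotR_mulVecLin_comm_of_isSymm hPw_symm, v₀, hv₀,
    Py.mulVecLin, mulVecLin_comp_self_of_isIdempotentElem hPy_idem,
    dotR_mulVecLin_comm_of_isSymm hPy_symm, cp, d, fun v z t ↦ ?_⟩
  rw [hG, eval_C, eval_rename, Sum.elim_comp_inl, hB, hD]
  simp only [dotR, Matrix.mulVecLin_apply, dotProduct]
  ring

/-- If `G` is a polynomial not divisible by `t` whose degree in `t` equals `2`,
and `F = G/t` is transnormal, then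
`G = c·(t² + ½(‖Π_W(v−v₀)‖² − β)·t + ⟨z, Π_Y z⟩ + ⟨c(v), z⟩ + d(v))` for some constant `c ≠ 0`,
a real number `β`, an orthogonal projection `Π_W` onto a subspace `W ⊆ V` with `v₀ ∈ W`, an
orthogonal projection `Π_Y` onto a subspace `Y ⊆ Z`, a polynomial map `c : V → Z` (components
`cp α`) and a polynomial function `d : V → ℝ`. -/
theorem stmt_7 (n m : ℕ)
    (J : (Fin m → ℝ) →ₗ[ℝ] (Fin n → ℝ) →ₗ[ℝ] (Fin n → ℝ))
    (hJ : ∀ (z : Fin m → ℝ) (v : Fin n → ℝ), dotR (J z v) (J z v) = dotR z z * dotR v v)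
    (br : (Fin n → ℝ) →ₗ[ℝ] (Fin n → ℝ) →ₗ[ℝ] (Fin m → ℝ))
    (hbr : ∀ (v₁ v₂ : Fin n → ℝ) (z : Fin m → ℝ), dotR (br v₁ v₂) z = dotR (J z v₁) v₂)
    (G : MvPolynomial (Fin n ⊕ Fin m ⊕ Unit) ℝ)
    (hGdiv : ¬ (MvPolynomial.X (Sum.inr (Sum.inr ())) ∣ G))
    (hdeg : MvPolynomial.degreeOf (Sum.inr (Sum.inr ())) G = 2)
    (b₁ b₀ : ℝ) (htrans : Transnormal n m br G b₁ b₀) :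
    ∃ c : ℝ, c ≠ 0 ∧ ∃ β : ℝ,
      ∃ Pw : (Fin n → ℝ) →ₗ[ℝ] (Fin n → ℝ), Pw ∘ₗ Pw = Pw ∧
        (∀ u w : Fin n → ℝ, dotR (Pw u) w = dotR u (Pw w)) ∧
      ∃ v₀ : Fin n → ℝ, Pw v₀ = v₀ ∧
      ∃ Py : (Fin m → ℝ) →ₗ[ℝ] (Fin m → ℝ), Py ∘ₗ Py = Py ∧
        (∀ u w : Fin m → ℝ, dotR (Py u) w = dotR u (Py w)) ∧
      ∃ cp : Fin m → MvPolynomial (Fin n) ℝ, ∃ d : MvPolynomial (Fin n) ℝ,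
        ∀ (v : Fin n → ℝ) (z : Fin m → ℝ) (t : ℝ),
          evp G v z t = c * (t ^ 2
            + (1 / 2) * (dotR (Pw (v - v₀)) (Pw (v - v₀)) - β) * t
            + dotR z (Py z)
            + (∑ α : Fin m, MvPolynomial.eval v (cp α) * z α)
            + MvPolynomial.eval v d) :=
  stmt_7_general n m br G hdeg b₁ b₀ htrans
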